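/- There exists an absolute constant C > 0 with the following property. Let R be a finite valuation ring of order q^r with q odd, and let A ⊆ R. Then the number of six-tuples (a, b, c, a', b', c') ∈ A^6 with a ≠ b, c ≠ b, a' ≠ b', c' ≠ b' satisfying (a − b)(c' − b') = (a' − b')(c − b) is at most C·( |A|^6 / q^r + q^{2r−1}·|A|^3 ). -/

import Mathlib

open Finset Pointwise

/-!
Divisibility in `R` is total. For points `a, b, c` of the grid `A × A`, write `(x, x') = a - b` and
`(z, z') = c - b`, so that collinearity reads `x * z' = x' * z`. One of `x, x', z, z'` divides the
other three; exchanging the two coordinates, or `a` with `c`, makes it `x`, at the cost of a factor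
`4`.

If `x` is a unit, the three points lie on one line `y = t * x + s`. A second moment estimate for
the number of points on such lines controls the third moment, since a line meets the grid in at
most `|A|` points.

If `x` is not a unit, then neither is `z`. Once `b`, `x` and `z` are fixed, only `|R|` pairs
`(x', z')` remain, so there are at most `|A|³ |R| |m|` such triples, and `|R| |m| = |R|² / q`.
-/

section FiniteSums

variable {ι : Type*} [Fintype ι] (f : ι → ℝ)

theorem sum_sub_mean_sq [Nonempty ι] :
    ∑ i, (f i - (∑ j, f j) / Fintype.card ι) ^ 2 =
      ∑ i, f i ^ 2 - (∑ i, f i) ^ 2 / Fintype.card ι := by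
  have hcard : (Fintype.card ι : ℝ) ≠ 0 := Nat.cast_ne_zero.2 Fintype.card_ne_zero
  simp only [sub_sq, sum_add_distrib, sum_sub_distrib, ← sum_mul, ← mul_sum, sum_const, card_univ,
    nsmul_eq_mul]
  field_simp
  ring

variable {f}

theorem sum_pow_three_le {K : ℝ} (hf : ∀ i, 0 ≤ f i) (hK : ∀ i, f i ≤ K) (μ : ℝ) :
    ∑ i, f i ^ 3 ≤ 2 * K * ∑ i, (f i - μ) ^ 2 + 2 * μ ^ 2 * ∑ i, f i := by
  rw [mul_sum, mul_sum, ← sum_add_distrib]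
  refine sum_le_sum fun i _ => ?_
  have hsq : f i ^ 2 ≤ 2 * ((f i - μ) ^ 2 + μ ^ 2) := by
    simpa using add_sq_le (a := f i - μ) (b := μ)
  calc f i ^ 3 = f i * f i ^ 2 := by ring
    _ ≤ f i * (2 * ((f i - μ) ^ 2 + μ ^ 2)) := mul_le_mul_of_nonneg_left hsq (hf i)
    _ = 2 * (f i * (f i - μ) ^ 2) + 2 * μ ^ 2 * f i := by ring
    _ ≤ 2 * (K * (f i - μ) ^ 2) + 2 * μ ^ 2 * f i := by gcongr; exact hK i
    _ = 2 * K * (f i - μ) ^ 2 + 2 * μ ^ 2 * f i := by ring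

end FiniteSums

section Lines

variable {R : Type*} [CommRing R]

/-- Incidence of the point `p` with the non-vertical line `y = ℓ.1 * x + ℓ.2`, which is encoded
by its slope and intercept. -/
def OnLine (p ℓ : R × R) : Prop :=
  p.2 = ℓ.1 * p.1 + ℓ.2

theorem injOn_fst_onLine (ℓ : R × R) : Set.InjOn Prod.fst {p | OnLine p ℓ} := by
  intro p hp p' hp' h
  refine Prod.ext h ?_
  rw [hp.out, hp'.out, h]

theorem OnLine.eq_of_isUnit_sub {p p' ℓ ℓ' : R × R} (hp : OnLine p ℓ) (hp' : OnLine p' ℓ)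
    (hq : OnLine p ℓ') (hq' : OnLine p' ℓ') (hu : IsUnit (p'.1 - p.1)) : ℓ = ℓ' := by
  unfold OnLine at hp hp' hq hq'
  have hslope : ℓ.1 = ℓ'.1 := hu.mul_right_cancel (by linear_combination hp - hp' - hq + hq')
  refine Prod.ext hslope ?_
  linear_combination hq - hp - p.1 * hslope

open Classical in
theorem card_onLine_product_le (A B : Finset R) (ℓ : R × R) :
    #{p ∈ A ×ˢ B | OnLine p ℓ} ≤ #A := by
  refine card_le_card_of_injOn Prod.fst (fun p hp => ?_)
    ((injOn_fst_onLine ℓ).mono fun p hp => (mem_filter.1 hp).2)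
  exact (mem_product.1 (mem_filter.1 hp).1).1

variable [Fintype R]

open Classical in
theorem card_lines_through (p : R × R) : #{ℓ | OnLine p ℓ} = Fintype.card R := by
  rw [← card_univ]
  refine card_nbij' Prod.fst (fun t => (t, p.2 - t * p.1)) ?_ ?_ ?_ ?_
  · exact fun ℓ _ => mem_coe.2 (mem_univ ℓ.1)
  · exact fun t _ => mem_coe.2 (mem_filter.2 ⟨mem_univ _, (add_sub_cancel _ _).symm⟩)
  · exact fun ℓ hℓ => Prod.ext rfl (sub_eq_iff_eq_add'.2 (mem_filter.1 hℓ).2)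
  · exact fun t _ => rfl

open Classical in
theorem sum_card_onLine (P : Finset (R × R)) :
    ∑ ℓ, #{p ∈ P | OnLine p ℓ} = #P * Fintype.card R := by
  have := sum_card_bipartiteAbove_eq_sum_card_bipartiteBelow (s := P) (t := univ) OnLine
  simp only [bipartiteAbove, bipartiteBelow, card_lines_through, sum_const, smul_eq_mul] at this
  exact this.symm

open Classical in
theorem sum_card_onLine_isUnit_le (P : Finset (R × R)) (p : R × R) :
    ∑ ℓ with OnLine p ℓ, #{p' ∈ P | OnLine p' ℓ ∧ IsUnit (p'.1 - p.1)} ≤ #P := by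
  have hcomm := sum_card_bipartiteAbove_eq_sum_card_bipartiteBelow (s := P)
    (t := {ℓ | OnLine p ℓ}) fun p' ℓ => OnLine p' ℓ ∧ IsUnit (p'.1 - p.1)
  simp only [bipartiteAbove, bipartiteBelow] at hcomm
  rw [← hcomm, card_eq_sum_ones]
  refine sum_le_sum fun p' _ => card_le_one.2 fun ℓ hℓ ℓ' hℓ' => ?_
  simp only [mem_filter, mem_univ, true_and] at hℓ hℓ'
  exact hℓ.1.eq_of_isUnit_sub hℓ.2.1 hℓ'.1 hℓ'.2.1 hℓ.2.2

open Classical in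
theorem sum_card_onLine_not_isUnit_le (P : Finset (R × R)) (p : R × R) :
    ∑ ℓ with OnLine p ℓ, #{p' ∈ P | OnLine p' ℓ ∧ ¬IsUnit (p'.1 - p.1)} ≤
      Fintype.card R * (nonunits R).ncard := by
  rw [← card_lines_through p, ← smul_eq_mul]
  refine sum_le_card_nsmul _ _ _ fun ℓ _ => ?_
  rw [Set.ncard_eq_toFinset_card']
  refine card_le_card_of_injOn (·.1 - p.1) (fun p' hp' => ?_) fun p' hp' p'' hp'' h => ?_
  · simpa using (mem_filter.1 hp').2.2
  · exact injOn_fst_onLine ℓ (mem_filter.1 hp').2.1 (mem_filter.1 hp'').2.1 (sub_left_injective h)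

open Classical in
theorem sum_sq_card_onLine_le (P : Finset (R × R)) :
    ∑ ℓ, #{p ∈ P | OnLine p ℓ} ^ 2 ≤
      #P ^ 2 + #P * (Fintype.card R * (nonunits R).ncard) := by
  have hsplit (ℓ p : R × R) : #{p' ∈ P | OnLine p' ℓ} =
      #{p' ∈ P | OnLine p' ℓ ∧ IsUnit (p'.1 - p.1)} +
        #{p' ∈ P | OnLine p' ℓ ∧ ¬IsUnit (p'.1 - p.1)} := by
    rw [← filter_filter, ← filter_filter, card_filter_add_card_filter_not]
  calc ∑ ℓ, #{p ∈ P | OnLine p ℓ} ^ 2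
      = ∑ ℓ, ∑ p ∈ P with OnLine p ℓ, #{p' ∈ P | OnLine p' ℓ} := by
        simp only [sq, sum_const, smul_eq_mul]
    _ = ∑ p ∈ P, ∑ ℓ with OnLine p ℓ, #{p' ∈ P | OnLine p' ℓ} :=
        sum_comm' (by simp [and_comm])
    _ ≤ ∑ _ ∈ P, (#P + Fintype.card R * (nonunits R).ncard) := by
        refine sum_le_sum fun p _ => ?_
        simp only [hsplit _ p, sum_add_distrib]
        exact add_le_add (sum_card_onLine_isUnit_le P p) (sum_card_onLine_not_isUnit_le P p)
    _ = #P ^ 2 + #P * (Fintype.card R * (nonunits R).ncard) := by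
        rw [sum_const, smul_eq_mul, mul_add, sq]

open Classical in
theorem sum_card_onLine_sub_mean_sq_le (P : Finset (R × R)) :
    ∑ ℓ, ((#{p ∈ P | OnLine p ℓ} : ℝ) - #P / Fintype.card R) ^ 2 ≤
      #P * (Fintype.card R * (nonunits R).ncard) := by
  have hR : (Fintype.card R : ℝ) ≠ 0 := Nat.cast_ne_zero.2 Fintype.card_ne_zero
  have hsum : ∑ ℓ, (#{p ∈ P | OnLine p ℓ} : ℝ) = #P * Fintype.card R := by
    exact_mod_cast sum_card_onLine P
  have hsq : ∑ ℓ, (#{p ∈ P | OnLine p ℓ} : ℝ) ^ 2 ≤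
      #P ^ 2 + #P * (Fintype.card R * (nonunits R).ncard) := by
    exact_mod_cast sum_sq_card_onLine_le P
  have hvar := sum_sub_mean_sq fun ℓ : R × R => (#{p ∈ P | OnLine p ℓ} : ℝ)
  rw [hsum, Fintype.card_prod, Nat.cast_mul, mul_div_mul_right _ _ hR, mul_pow, ← sq,
    mul_div_cancel_right₀ _ (pow_ne_zero 2 hR)] at hvar
  linarith

open Classical in
theorem sum_card_onLine_pow_three_le (P : Finset (R × R)) {K : ℕ}
    (hK : ∀ ℓ, #{p ∈ P | OnLine p ℓ} ≤ K) :
    ∑ ℓ, (#{p ∈ P | OnLine p ℓ} : ℝ) ^ 3 ≤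
      2 * #P ^ 3 / Fintype.card R + 2 * K * (#P * (Fintype.card R * (nonunits R).ncard)) := by
  have hR : (Fintype.card R : ℝ) ≠ 0 := Nat.cast_ne_zero.2 Fintype.card_ne_zero
  have hsum : ∑ ℓ, (#{p ∈ P | OnLine p ℓ} : ℝ) = #P * Fintype.card R := by
    exact_mod_cast sum_card_onLine P
  calc ∑ ℓ, (#{p ∈ P | OnLine p ℓ} : ℝ) ^ 3
      ≤ 2 * K * ∑ ℓ, ((#{p ∈ P | OnLine p ℓ} : ℝ) - #P / Fintype.card R) ^ 2 +
          2 * (#P / Fintype.card R : ℝ) ^ 2 * ∑ ℓ, (#{p ∈ P | OnLine p ℓ} : ℝ) :=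
        sum_pow_three_le (fun _ => Nat.cast_nonneg _) (fun ℓ => Nat.cast_le.2 (hK ℓ)) _
    _ ≤ 2 * K * (#P * (Fintype.card R * (nonunits R).ncard)) +
          2 * (#P / Fintype.card R : ℝ) ^ 2 * (#P * Fintype.card R) := by
        rw [hsum]
        gcongr
        exact sum_card_onLine_sub_mean_sq_le P
    _ = 2 * #P ^ 3 / Fintype.card R +
          2 * K * (#P * (Fintype.card R * (nonunits R).ncard)) := by
        field_simp
        ring

end Lines

section CollinearTriples

variable {R : Type*} [CommRing R]

open Classical in
/-- The triples `(a, b, c)` of points of `P` such that the determinant of `a - b` and `c - b`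
vanishes. Over a ring with zero divisors this does not force the points onto a common line. -/
noncomputable def collinearTriples (P : Finset (R × R)) :
    Finset ((R × R) × (R × R) × (R × R)) :=
  {t ∈ P ×ˢ P ×ˢ P | (t.1.1 - t.2.1.1) * (t.2.2.2 - t.2.1.2) =
    (t.1.2 - t.2.1.2) * (t.2.2.1 - t.2.1.1)}

open Classical in
/-- The collinear triples `(a, b, c)` in which the first coordinate of `a - b` divides the two
entries of the matrix with rows `a - b`, `c - b` that are adjacent to it. -/
noncomputable def pivotedTriples (P : Finset (R × R)) :
    Finset ((R × R) × (R × R) × (R × R)) :=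
  {t ∈ collinearTriples P | t.1.1 - t.2.1.1 ∣ t.1.2 - t.2.1.2 ∧ t.1.1 - t.2.1.1 ∣ t.2.2.1 - t.2.1.1}

variable {P : Finset (R × R)} {a b c : R × R}

theorem mem_collinearTriples : (a, b, c) ∈ collinearTriples P ↔
    (a ∈ P ∧ b ∈ P ∧ c ∈ P) ∧ (a.1 - b.1) * (c.2 - b.2) = (a.2 - b.2) * (c.1 - b.1) := by
  simp only [collinearTriples, mem_filter, mem_product]

theorem mem_pivotedTriples : (a, b, c) ∈ pivotedTriples P ↔
    (a, b, c) ∈ collinearTriples P ∧ a.1 - b.1 ∣ a.2 - b.2 ∧ a.1 - b.1 ∣ c.1 - b.1 := by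
  simp only [pivotedTriples, mem_filter]

theorem reverse_mem_collinearTriples (h : (a, b, c) ∈ collinearTriples P) :
    (c, b, a) ∈ collinearTriples P := by
  rw [mem_collinearTriples] at h ⊢
  exact ⟨⟨h.1.2.2, h.1.2.1, h.1.1⟩, by linear_combination -h.2⟩

theorem swap_mem_collinearTriples {A : Finset R} (h : (a, b, c) ∈ collinearTriples (A ×ˢ A)) :
    (a.swap, b.swap, c.swap) ∈ collinearTriples (A ×ˢ A) := by
  simp only [mem_collinearTriples, mem_product, Prod.fst_swap, Prod.snd_swap] at h ⊢
  exact ⟨by tauto, h.2.symm⟩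

theorem exists_dvd_adjacent [PreValuationRing R] (x x' z z' : R) :
    (x ∣ x' ∧ x ∣ z) ∨ (x' ∣ x ∧ x' ∣ z') ∨ (z ∣ z' ∧ z ∣ x) ∨ (z' ∣ z ∧ z' ∣ x') := by
  rcases ValuationRing.dvd_total x z' with h | h <;>
    rcases ValuationRing.dvd_total x' z with h' | h'
  · exact (ValuationRing.dvd_total x x').imp (fun k => ⟨k, k.trans h'⟩)
      fun k => .inl ⟨k, k.trans h⟩
  · exact (ValuationRing.dvd_total x z).imp (fun k => ⟨k.trans h', k⟩)
      fun k => .inr (.inl ⟨k.trans h, k⟩)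
  · exact .inr ((ValuationRing.dvd_total x' z').imp (fun k => ⟨k.trans h, k⟩)
      fun k => .inr ⟨k.trans h', k⟩)
  · exact .inr (.inr ((ValuationRing.dvd_total z z').imp (fun k => ⟨k, k.trans h⟩)
      fun k => ⟨k, k.trans h'⟩))

theorem card_collinearTriples_le_four_mul [PreValuationRing R] (A : Finset R) :
    #(collinearTriples (A ×ˢ A)) ≤ 4 * #(pivotedTriples (A ×ˢ A)) := by
  classical
  set T := pivotedTriples (A ×ˢ A)
  let reverse : (R × R) × (R × R) × (R × R) → (R × R) × (R × R) × (R × R) :=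
    fun t => (t.2.2, t.2.1, t.1)
  let swap : (R × R) × (R × R) × (R × R) → (R × R) × (R × R) × (R × R) :=
    fun t => (t.1.swap, t.2.1.swap, t.2.2.swap)
  have hcover : collinearTriples (A ×ˢ A) ⊆
      (T ∪ T.image swap) ∪ (T.image reverse ∪ T.image (reverse ∘ swap)) := by
    rintro ⟨a, b, c⟩ h
    simp only [mem_union]
    rcases exists_dvd_adjacent (a.1 - b.1) (a.2 - b.2) (c.1 - b.1) (c.2 - b.2) with
      hdvd | hdvd | hdvd | hdvd
    · exact .inl (.inl (mem_pivotedTriples.2 ⟨h, hdvd⟩))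
    · exact .inl (.inr (mem_image_of_mem swap
        (mem_pivotedTriples.2 ⟨swap_mem_collinearTriples h, hdvd⟩)))
    · exact .inr (.inl (mem_image_of_mem reverse
        (mem_pivotedTriples.2 ⟨reverse_mem_collinearTriples h, hdvd⟩)))
    · exact .inr (.inr (mem_image_of_mem (reverse ∘ swap) (mem_pivotedTriples.2
        ⟨swap_mem_collinearTriples (reverse_mem_collinearTriples h), hdvd⟩)))
  have hunion : #((T ∪ T.image swap) ∪ (T.image reverse ∪ T.image (reverse ∘ swap))) ≤
      (#T + #T) + (#T + #T) := by
    refine (card_union_le _ _).trans (add_le_add ?_ ?_) <;>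
    refine (card_union_le _ _).trans (add_le_add ?_ ?_) <;>
    first | exact le_rfl | exact card_image_le
  linarith [card_le_card hcover]

variable [Fintype R]

open Classical in
theorem card_pivotedTriples_isUnit_le (P : Finset (R × R)) :
    #{t ∈ pivotedTriples P | IsUnit (t.1.1 - t.2.1.1)} ≤ ∑ ℓ, #{p ∈ P | OnLine p ℓ} ^ 3 := by
  let L (ℓ : R × R) : Finset (R × R) := {p ∈ P | OnLine p ℓ}
  have hcover : {t ∈ pivotedTriples P | IsUnit (t.1.1 - t.2.1.1)} ⊆
      univ.biUnion fun ℓ => L ℓ ×ˢ L ℓ ×ˢ L ℓ := by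
    rintro ⟨a, b, c⟩ h
    obtain ⟨h, hu⟩ := mem_filter.1 h
    obtain ⟨h, ⟨t, ht⟩, -⟩ := mem_pivotedTriples.1 h
    obtain ⟨⟨ha, hb, hc⟩, hcol⟩ := mem_collinearTriples.1 h
    have hslope : c.2 - b.2 = t * (c.1 - b.1) :=
      hu.mul_left_cancel (by linear_combination hcol + (c.1 - b.1) * ht)
    simp only [mem_biUnion, mem_univ, true_and, mem_product, L, mem_filter]
    refine ⟨(t, b.2 - t * b.1), ⟨ha, ?_⟩, ⟨hb, ?_⟩, hc, ?_⟩ <;> unfold OnLine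
    · linear_combination ht
    · ring
    · linear_combination hslope
  calc _ ≤ _ := card_le_card hcover
    _ ≤ ∑ ℓ, #(L ℓ ×ˢ L ℓ ×ˢ L ℓ) := card_biUnion_le
    _ = ∑ ℓ, #(L ℓ) ^ 3 := by
      refine sum_congr rfl fun ℓ _ => ?_
      rw [card_product, card_product]
      ring

open Classical in
theorem card_dvd_and_mul_eq_mul_le {x z : R} (hz : x ∣ z) :
    #{v : R × R | x ∣ v.1 ∧ x * v.2 = v.1 * z} ≤ Fintype.card R := by
  obtain ⟨w, rfl⟩ := hz
  choose! quot hquot using fun (y : R) (h : x ∣ y) => h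
  -- `x * (v.2 - w * v.1) = 0`, so `v.1 = x * (quot v.1 + (v.2 - w * v.1))`.
  refine card_le_card_of_injOn (fun v => quot v.1 + (v.2 - w * v.1)) (fun _ _ => mem_univ _) ?_
  have hrecover (v : R × R) (hv : x ∣ v.1 ∧ x * v.2 = v.1 * (x * w)) :
      v.1 = x * (quot v.1 + (v.2 - w * v.1)) := by
    linear_combination hquot v.1 hv.1 - hv.2
  intro v hv v' hv' (h : quot v.1 + (v.2 - w * v.1) = quot v'.1 + (v'.2 - w * v'.1))
  have hfst : v.1 = v'.1 := by
    rw [hrecover v (mem_filter.1 hv).2, hrecover v' (mem_filter.1 hv').2, h]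
  rw [hfst] at h
  exact Prod.ext hfst (by linear_combination h)

open Classical in
theorem card_pivotedTriples_filter_eq_le (P : Finset (R × R)) (b : R × R) (a₁ c₁ : R) :
    #{t ∈ pivotedTriples P | t.2.1 = b ∧ t.1.1 = a₁ ∧ t.2.2.1 = c₁} ≤ Fintype.card R := by
  have hfiber {t : (R × R) × (R × R) × (R × R)}
      (ht : t ∈ ({t ∈ pivotedTriples P | t.2.1 = b ∧ t.1.1 = a₁ ∧ t.2.2.1 = c₁} : Finset _)) :
      ∃ a₂ c₂, t = ((a₁, a₂), b, (c₁, c₂)) ∧ a₁ - b.1 ∣ a₂ - b.2 ∧ a₁ - b.1 ∣ c₁ - b.1 ∧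
        (a₁ - b.1) * (c₂ - b.2) = (a₂ - b.2) * (c₁ - b.1) := by
    obtain ⟨⟨a₁, a₂⟩, b, c₁, c₂⟩ := t
    obtain ⟨h, rfl, rfl, rfl⟩ := mem_filter.1 ht
    obtain ⟨h, ha, hc⟩ := mem_pivotedTriples.1 h
    exact ⟨a₂, c₂, rfl, ha, hc, (mem_collinearTriples.1 h).2⟩
  obtain hempty | ⟨t, ht⟩ := Finset.eq_empty_or_nonempty
    {t ∈ pivotedTriples P | t.2.1 = b ∧ t.1.1 = a₁ ∧ t.2.2.1 = c₁}
  · exact hempty ▸ Nat.zero_le _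
  obtain ⟨-, -, -, -, hz, -⟩ := hfiber ht
  refine le_trans (card_le_card_of_injOn
    (fun t => (t.1.2 - b.2, t.2.2.2 - b.2)) (fun t ht => ?_) fun t ht t' ht' h => ?_)
    (card_dvd_and_mul_eq_mul_le hz)
  · obtain ⟨a₂, c₂, rfl, hdvd, -, hcol⟩ := hfiber ht
    exact mem_coe.2 (mem_filter.2 ⟨mem_univ _, hdvd, hcol⟩)
  · obtain ⟨a₂, c₂, rfl, -⟩ := hfiber ht
    obtain ⟨a₂', c₂', rfl, -⟩ := hfiber ht'
    simpa using h

open Classical in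
theorem card_pivotedTriples_not_isUnit_le (A B : Finset R) :
    #{t ∈ pivotedTriples (A ×ˢ B) | ¬IsUnit (t.1.1 - t.2.1.1)} ≤
      Fintype.card R * (#A * #B * #A * (nonunits R).ncard) := by
  rw [Set.ncard_eq_toFinset_card', ← card_product, ← card_product, ← card_product]
  refine card_le_mul_card_image_of_maps_to
    (f := fun s => ((s.2.1, s.1.1), s.2.2.1 - s.2.1.1)) ?_ _ ?_
  · rintro ⟨a, b, c⟩ h
    obtain ⟨h, hx⟩ := mem_filter.1 h
    obtain ⟨h, -, hz⟩ := mem_pivotedTriples.1 h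
    obtain ⟨⟨ha, hb, -⟩, -⟩ := mem_collinearTriples.1 h
    exact mem_product.2 ⟨mem_product.2 ⟨hb, (mem_product.1 ha).1⟩,
      Set.mem_toFinset.2 (mt (isUnit_of_dvd_unit hz) hx)⟩
  · rintro ⟨⟨b, a₁⟩, z⟩ -
    refine (card_le_card fun t ht => ?_).trans
      (card_pivotedTriples_filter_eq_le (A ×ˢ B) b a₁ (z + b.1))
    simp only [mem_filter, Prod.mk.injEq] at ht ⊢
    obtain ⟨⟨ht, -⟩, ⟨rfl, rfl⟩, rfl⟩ := ht
    exact ⟨ht, rfl, rfl, (sub_add_cancel _ _).symm⟩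

theorem card_collinearTriples_le [PreValuationRing R] (A : Finset R) :
    (#(collinearTriples (A ×ˢ A)) : ℝ) ≤
      12 * (#A ^ 6 / Fintype.card R + Fintype.card R * (nonunits R).ncard * #A ^ 3) := by
  classical
  set E : ℝ := Fintype.card R * (nonunits R).ncard * #A ^ 3
  have hsymm : (#(collinearTriples (A ×ˢ A)) : ℝ) ≤ 4 * #(pivotedTriples (A ×ˢ A)) := by
    exact_mod_cast card_collinearTriples_le_four_mul A
  have hunit : (#{t ∈ pivotedTriples (A ×ˢ A) | IsUnit (t.1.1 - t.2.1.1)} : ℝ) ≤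
      2 * (#A ^ 6 / Fintype.card R) + 2 * E := by
    calc _ ≤ ∑ ℓ, (#{p ∈ A ×ˢ A | OnLine p ℓ} : ℝ) ^ 3 := by
          exact_mod_cast card_pivotedTriples_isUnit_le (A ×ˢ A)
      _ ≤ _ := sum_card_onLine_pow_three_le _ (card_onLine_product_le A A)
      _ = _ := by
          rw [card_product, Nat.cast_mul]
          ring
  have hnonunit : (#{t ∈ pivotedTriples (A ×ˢ A) | ¬IsUnit (t.1.1 - t.2.1.1)} : ℝ) ≤ E := by
    calc _ ≤ ((Fintype.card R * (#A * #A * #A * (nonunits R).ncard) : ℕ) : ℝ) := by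
          exact_mod_cast card_pivotedTriples_not_isUnit_le A A
      _ = E := by
          push_cast
          ring
  have hsplit : (#(pivotedTriples (A ×ˢ A)) : ℝ) =
      #{t ∈ pivotedTriples (A ×ˢ A) | IsUnit (t.1.1 - t.2.1.1)} +
        #{t ∈ pivotedTriples (A ×ˢ A) | ¬IsUnit (t.1.1 - t.2.1.1)} := by
    exact_mod_cast (card_filter_add_card_filter_not _).symm
  have hmain : (0 : ℝ) ≤ #A ^ 6 / Fintype.card R := by positivity
  linarith

end CollinearTriples

section LocalRings

variable {R : Type*} [CommRing R] [IsLocalRing R]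

theorem preValuationRing_of_isLocalRing_of_isBezout [IsBezout R] : PreValuationRing R := by
  refine PreValuationRing.iff_dvd_total.2 ⟨fun a b => ?_⟩
  obtain ⟨a', ha⟩ := IsBezout.gcd_dvd_left a b
  obtain ⟨b', hb⟩ := IsBezout.gcd_dvd_right a b
  obtain ⟨u, v, huv⟩ := IsBezout.gcd_eq_sum a b
  generalize IsBezout.gcd a b = d at ha hb huv
  subst ha hb
  by_cases ha' : IsUnit a'
  · exact .inl (ha'.mul_right_dvd.2 (dvd_mul_right d b'))
  by_cases hb' : IsUnit b'
  · exact .inr (hb'.mul_right_dvd.2 (dvd_mul_right d a'))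
  have hunit : IsUnit (1 - (u * a' + v * b')) :=
    IsLocalRing.isUnit_one_sub_self_of_mem_nonunits _
      (IsLocalRing.nonunits_add (mul_mem_nonunits_right ha') (mul_mem_nonunits_right hb'))
  have hzero : d = 0 := hunit.mul_left_eq_zero.1 (by linear_combination -huv)
  simp [hzero]

open IsLocalRing in
theorem card_eq_card_residueField_mul_ncard_nonunits :
    Nat.card R = Nat.card (ResidueField R) * (nonunits R).ncard :=
  (maximalIdeal R).toAddSubgroup.card_eq_card_quotient_mul_card_addSubgroup

theorem card_mul_ncard_nonunits_eq_pow [Finite R] {q r : ℕ}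
    (hq : Nat.card (IsLocalRing.ResidueField R) = q) (hR : Nat.card R = q ^ r) :
    Nat.card R * (nonunits R).ncard = q ^ (2 * r - 1) := by
  have hr : r ≠ 0 := by
    rintro rfl
    exact Finite.one_lt_card.ne' (hR.trans (pow_zero q))
  have hq0 : q ≠ 0 := by
    rintro rfl
    exact Nat.card_pos.ne' (hR.trans (zero_pow hr))
  refine mul_left_cancel₀ hq0 ?_
  calc q * (Nat.card R * (nonunits R).ncard)
      = Nat.card R * Nat.card R := by
        rw [mul_left_comm, ← hq, ← card_eq_card_residueField_mul_ncard_nonunits]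
    _ = q * q ^ (2 * r - 1) := by
        rw [hR, ← pow_add, ← pow_succ', Nat.sub_add_cancel (by lia), two_mul]

end LocalRings

theorem stmt_9_general {R : Type*} [CommRing R] [Fintype R] [DecidableEq R] [IsLocalRing R]
    [PreValuationRing R] {q r : ℕ} (hq : Nat.card (IsLocalRing.ResidueField R) = q)
    (hR : Fintype.card R = q ^ r) (A : Finset R) :
    (#{t ∈ A ×ˢ A ×ˢ A ×ˢ A ×ˢ A ×ˢ A | (t.1 - t.2.1) * (t.2.2.2.2.2 - t.2.2.2.2.1) =
      (t.2.2.2.1 - t.2.2.2.2.1) * (t.2.2.1 - t.2.1)} : ℝ) ≤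
      12 * ((#A : ℝ) ^ 6 / (q : ℝ) ^ r + (q : ℝ) ^ (2 * r - 1) * (#A : ℝ) ^ 3) := by
  have hnonunits : Fintype.card R * (nonunits R).ncard = q ^ (2 * r - 1) := by
    rw [← Nat.card_eq_fintype_card] at hR ⊢
    exact card_mul_ncard_nonunits_eq_pow hq hR
  have hpoints : #{t ∈ A ×ˢ A ×ˢ A ×ˢ A ×ˢ A ×ˢ A |
      (t.1 - t.2.1) * (t.2.2.2.2.2 - t.2.2.2.2.1) =
        (t.2.2.2.1 - t.2.2.2.2.1) * (t.2.2.1 - t.2.1)} ≤ #(collinearTriples (A ×ˢ A)) := by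
    refine card_le_card_of_injOn
      (fun t => ((t.1, t.2.2.2.1), (t.2.1, t.2.2.2.2.1), (t.2.2.1, t.2.2.2.2.2))) ?_ ?_
    · intro t ht
      simp only [coe_filter, mem_product, Set.mem_ofPred_eq] at ht
      simp only [mem_coe, mem_collinearTriples, mem_product]
      tauto
    · rintro ⟨a, b, c, a', b', c'⟩ - ⟨d, e, f, d', e', f'⟩ - h
      simp only [Prod.mk.injEq] at h ⊢
      tauto
  calc _ ≤ (#(collinearTriples (A ×ˢ A)) : ℝ) := Nat.cast_le.2 hpoints
    _ ≤ _ := card_collinearTriples_le A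
    _ = _ := by
      rw [← Nat.cast_mul, hnonunits, hR, Nat.cast_pow, Nat.cast_pow]

/-- (Collinear triples bound.) There is an absolute constant `C > 0`
such that: for any finite valuation ring `R` of order `q ^ r` with `q` odd and any
`A ⊆ R`, the number of six-tuples `(a, b, c, a', b', c') ∈ A⁶` with `a ≠ b`, `c ≠ b`,
`a' ≠ b'`, `c' ≠ b'` and `(a − b)(c' − b') = (a' − b')(c − b)` is at most
`C * (|A|⁶ / q^r + q^(2r-1) * |A|³)`. -/
theorem stmt_9 :
    ∃ C : ℝ, 0 < C ∧
      ∀ (R : Type) [CommRing R] [Fintype R] [DecidableEq R] [Nontrivial R]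
        [IsLocalRing R] [IsPrincipalIdealRing R]
        (q r : ℕ),
        Nat.card (IsLocalRing.ResidueField R) = q →
        Odd q →
        IsLocalRing.maximalIdeal R ^ r = ⊥ →
        (∀ k < r, IsLocalRing.maximalIdeal R ^ k ≠ ⊥) →
        Fintype.card R = q ^ r →
        ∀ A : Finset R,
          (((A ×ˢ A ×ˢ A ×ˢ A ×ˢ A ×ˢ A).filter
              (fun t => t.1 ≠ t.2.1 ∧ t.2.2.1 ≠ t.2.1 ∧
                t.2.2.2.1 ≠ t.2.2.2.2.1 ∧ t.2.2.2.2.2 ≠ t.2.2.2.2.1 ∧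
                (t.1 - t.2.1) * (t.2.2.2.2.2 - t.2.2.2.2.1) =
                  (t.2.2.2.1 - t.2.2.2.2.1) * (t.2.2.1 - t.2.1))).card : ℝ) ≤
            C * ((A.card : ℝ) ^ 6 / (q : ℝ) ^ r + (q : ℝ) ^ (2 * r - 1) * (A.card : ℝ) ^ 3) := by
  refine ⟨12, by norm_num, fun R _ _ _ _ _ _ q r hq _ _ _ hR A => ?_⟩
  have : PreValuationRing R := preValuationRing_of_isLocalRing_of_isBezout
  refine le_trans ?_ (stmt_9_general hq hR A)
  gcongr with t
  exact fun h => h.2.2.2.2
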